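/- (Required supply lower bound, Proposition 4.) For every admissible backlash trajectory (φ, I) with φ(t₀) = 0 and every t₁ ≥ t₀, the supplied energy satisfies ∫_{t₀}^{t₁} I(t)·φ'(t) dt ≥ S^r(φ(t₁)), where S^r : ℝ → ℝ is defined by S^r(ψ) = ((ψ+h)² − h²)/(2L) for ψ ≥ 0 and S^r(ψ) = ((ψ−h)² − h²)/(2L) for ψ ≤ 0. -/

import Mathlib

/-!
An admissible trajectory receives the power `(φ φ' + h |φ'|) / L`. The first part is the derivative
of `φ² / (2L)`, and `∫ |φ'|` is the length of the path of `φ`, which is at least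
`|φ t₁ - φ t₀| ≥ |φ t₁| - |φ t₀|`. Since `Sr ψ = (ψ² / 2 + h |ψ|) / L`, the supplied energy is at
least the increment of `Sr` along the trajectory: `Sr` is a storage function, and the lower bound
for trajectories that start at `0` follows from `Sr 0 = 0`.
-/

/-- A pair `(φ, I)` is an admissible backlash trajectory. -/
def AdmissibleBacklash (L h : ℝ) (φ I : ℝ → ℝ) : Prop :=
  ContDiff ℝ 1 φ ∧
  ∀ t : ℝ, (0 < deriv φ t → I t = (φ t + h) / L) ∧
           (deriv φ t < 0 → I t = (φ t - h) / L)

/-- The required supply of the backlash inductor (ground state at the origin). -/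
noncomputable def Sr (L h ψ : ℝ) : ℝ :=
  if 0 ≤ ψ then ((ψ + h) ^ 2 - h ^ 2) / (2 * L)
  else ((ψ - h) ^ 2 - h ^ 2) / (2 * L)

theorem Sr_eq (L h ψ : ℝ) : Sr L h ψ = (ψ ^ 2 / 2 + h * |ψ|) / L := by
  unfold Sr
  split_ifs with hψ
  · rw [abs_of_nonneg hψ]
    ring
  · rw [abs_of_neg (not_le.mp hψ)]
    ring

theorem integral_mul_deriv_self {f f' : ℝ → ℝ} {a b : ℝ}
    (hf : ∀ t ∈ Set.uIcc a b, HasDerivAt f (f' t) t)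
    (hf' : IntervalIntegrable f' MeasureTheory.volume a b) :
    ∫ t in a..b, f t * f' t = (f b ^ 2 - f a ^ 2) / 2 := by
  have hparts := intervalIntegral.integral_mul_deriv_eq_deriv_mul hf hf hf' hf'
  simp only [mul_comm (f' _)] at hparts
  linarith

namespace AdmissibleBacklash

variable {L h : ℝ} {φ I : ℝ → ℝ}

theorem mul_deriv_eq (hadm : AdmissibleBacklash L h φ I) (t : ℝ) :
    I t * deriv φ t = (φ t * deriv φ t + h * |deriv φ t|) / L := by
  rcases lt_trichotomy (deriv φ t) 0 with hneg | hzero | hpos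
  · rw [(hadm.2 t).2 hneg, abs_of_neg hneg]
    ring
  · simp [hzero]
  · rw [(hadm.2 t).1 hpos, abs_of_pos hpos]
    ring

theorem integral_mul_deriv_eq (hadm : AdmissibleBacklash L h φ I) (t₀ t₁ : ℝ) :
    ∫ t in t₀..t₁, I t * deriv φ t =
      ((φ t₁ ^ 2 - φ t₀ ^ 2) / 2 + h * ∫ t in t₀..t₁, |deriv φ t|) / L := by
  have hφ' : Continuous (deriv φ) := hadm.1.continuous_deriv le_rfl
  have hsq : ∫ t in t₀..t₁, φ t * deriv φ t = (φ t₁ ^ 2 - φ t₀ ^ 2) / 2 :=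
    integral_mul_deriv_self
      (fun t _ ↦ (hadm.1.differentiable one_ne_zero t).hasDerivAt) (hφ'.intervalIntegrable _ _)
  simp_rw [hadm.mul_deriv_eq]
  rw [intervalIntegral.integral_div, intervalIntegral.integral_add
    ((hadm.1.continuous.fun_mul hφ').intervalIntegrable _ _)
    ((hφ'.abs.const_mul h).intervalIntegrable _ _), intervalIntegral.integral_const_mul, hsq]

end AdmissibleBacklash

theorem stmt11_general {L h : ℝ} (hL : 0 < L) (hh : 0 ≤ h)
    {φ I : ℝ → ℝ} (hadm : AdmissibleBacklash L h φ I) {t₀ t₁ : ℝ} (h01 : t₀ ≤ t₁) :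
    Sr L h (φ t₁) - Sr L h (φ t₀) ≤ ∫ t in t₀..t₁, I t * deriv φ t := by
  have hpath : |φ t₁| - |φ t₀| ≤ ∫ t in t₀..t₁, |deriv φ t| :=
    (abs_sub_abs_le_abs_sub _ _).trans <| norm_sub_le_integral_of_norm_deriv_le_of_le h01
      hadm.1.continuous.continuousOn (hadm.1.differentiable one_ne_zero).differentiableOn
      (.of_forall fun _ _ ↦ le_rfl)
      ((hadm.1.continuous_deriv le_rfl).abs.intervalIntegrable _ _)
  calc Sr L h (φ t₁) - Sr L h (φ t₀)
      = ((φ t₁ ^ 2 - φ t₀ ^ 2) / 2 + h * (|φ t₁| - |φ t₀|)) / L := by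
        rw [Sr_eq, Sr_eq]
        ring
    _ ≤ ((φ t₁ ^ 2 - φ t₀ ^ 2) / 2 + h * ∫ t in t₀..t₁, |deriv φ t|) / L := by gcongr
    _ = ∫ t in t₀..t₁, I t * deriv φ t := (hadm.integral_mul_deriv_eq t₀ t₁).symm

theorem stmt11 (L h : ℝ) (hL : 0 < L) (hh : 0 ≤ h)
    (φ I : ℝ → ℝ) (hadm : AdmissibleBacklash L h φ I)
    (t₀ t₁ : ℝ) (h0 : φ t₀ = 0) (h01 : t₀ ≤ t₁) :
    Sr L h (φ t₁) ≤ ∫ t in t₀..t₁, I t * deriv φ t := by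
  simpa [Sr, h0] using stmt11_general hL hh hadm h01
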